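/- arXiv:1302.5902 — 4 statements merged into one kernel-verified Lean document; each statement's English description precedes it below -/
import Mathlib

section
/- Let ρ_AB be a density matrix on ℂ^{d_A} ⊗ ℂ^{d_B} with ρ_B positive definite. Define the Choi–Jamiołkowski map 𝓔(Y) = d_A · Tr_A[(Yᵀ ⊗ I_B) ρ_AB] on d_A × d_A matrices, let 𝓔† be its adjoint with respect to the Hilbert–Schmidt inner product ⟨X,Y⟩ = Tr[X†Y], and define the pretty good recovery map Λ^pg(X) = (1/d_A) · 𝓔†(ρ_B^{−1/2} X ρ_B^{−1/2}) on d_B × d_B matrices. Then ⟨Φ| (id_A ⊗ Λ^pg)(ρ_AB) |Φ⟩ = (1/d_A) · Tr[ρ̃_AB²], where |Φ⟩ = (1/√d_A) Σ_{j=1}^{d_A} |j⟩|j⟩ is the maximally entangled state; equivalently H₂(A|B) = −log₂[d_A · F^pg(A|B)] with F^pg(A|B) := ⟨Φ| (id_A ⊗ Λ^pg)(ρ_AB) |Φ⟩. -/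
open Matrix BigOperators ComplexOrder Kronecker

noncomputable section

/-- Partial trace over the first (A) tensor factor. -/
def ptraceA {dA dB : ℕ} (ρ : Matrix (Fin dA × Fin dB) (Fin dA × Fin dB) ℂ) :
    Matrix (Fin dB) (Fin dB) ℂ :=
  Matrix.of fun i j => ∑ a : Fin dA, ρ (a, i) (a, j)

/-- `ρ_B^v = Tr_A[(|v⟩⟨v| ⊗ I_B) ρ]`. -/
def condB {dA dB : ℕ} (ρ : Matrix (Fin dA × Fin dB) (Fin dA × Fin dB) ℂ)
    (v : Fin dA → ℂ) : Matrix (Fin dB) (Fin dB) ℂ :=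
  ptraceA (((vecMulVec v (star v)) ⊗ₖ (1 : Matrix (Fin dB) (Fin dB) ℂ)) * ρ)

/-- Real power of a Hermitian matrix, via the spectral decomposition (junk value `0`
on non-Hermitian matrices). -/
def mpow {n : Type*} [Fintype n] [DecidableEq n] (M : Matrix n n ℂ) (r : ℝ) :
    Matrix n n ℂ :=
  if h : M.IsHermitian then
    (h.eigenvectorUnitary : Matrix n n ℂ) *
      Matrix.diagonal (fun i => ((h.eigenvalues i ^ r : ℝ) : ℂ)) *
      star (h.eigenvectorUnitary : Matrix n n ℂ)
  else 0

/-- `ρ̃_AB = (I_A ⊗ ρ_B^{-1/4}) ρ_AB (I_A ⊗ ρ_B^{-1/4})`. -/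
def tildeRho {dA dB : ℕ} (ρ : Matrix (Fin dA × Fin dB) (Fin dA × Fin dB) ℂ) :
    Matrix (Fin dA × Fin dB) (Fin dA × Fin dB) ℂ :=
  ((1 : Matrix (Fin dA) (Fin dA) ℂ) ⊗ₖ mpow (ptraceA ρ) (-(1/4 : ℝ))) * ρ *
    ((1 : Matrix (Fin dA) (Fin dA) ℂ) ⊗ₖ mpow (ptraceA ρ) (-(1/4 : ℝ)))

/-- The pretty-good guessing probability term for a single basis vector `v`:
`Tr[ρ_B^{-1/2} ρ_B^v ρ_B^{-1/2} ρ_B^v]`. -/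
def pgTerm {dA dB : ℕ} (ρ : Matrix (Fin dA × Fin dB) (Fin dA × Fin dB) ℂ)
    (v : Fin dA → ℂ) : ℂ :=
  (mpow (ptraceA ρ) (-(1/2 : ℝ)) * condB ρ v * mpow (ptraceA ρ) (-(1/2 : ℝ)) *
    condB ρ v).trace

end

noncomputable section

/-- The Choi–Jamiołkowski map of `ρ_AB`: `𝓔(Y) = d_A · Tr_A[(Yᵀ ⊗ I_B) ρ_AB]`. -/
def choiMap {dA dB : ℕ} (ρ : Matrix (Fin dA × Fin dB) (Fin dA × Fin dB) ℂ)
    (Y : Matrix (Fin dA) (Fin dA) ℂ) : Matrix (Fin dB) (Fin dB) ℂ :=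
  (dA : ℂ) • ptraceA ((Yᵀ ⊗ₖ (1 : Matrix (Fin dB) (Fin dB) ℂ)) * ρ)

/-- Apply a superoperator `Λ` (from operators on `B` to operators on `C`) to the second
tensor factor: `(id_A ⊗ Λ)(ρ)`. -/
def idTensor {dA dB dC : ℕ}
    (Λ : Matrix (Fin dB) (Fin dB) ℂ → Matrix (Fin dC) (Fin dC) ℂ)
    (ρ : Matrix (Fin dA × Fin dB) (Fin dA × Fin dB) ℂ) :
    Matrix (Fin dA × Fin dC) (Fin dA × Fin dC) ℂ :=
  Matrix.of fun p q => Λ (Matrix.of fun b b' => ρ (p.1, b) (q.1, b')) p.2 q.2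

/-- The maximally entangled state `|Φ⟩ = (1/√d) Σ_j |j⟩|j⟩` as a vector. -/
def maxEnt (d : ℕ) : Fin d × Fin d → ℂ :=
  fun p => if p.1 = p.2 then ((Real.sqrt d : ℝ) : ℂ)⁻¹ else 0

/-- Real powers of a positive definite matrix multiply by adding exponents. -/
theorem mpow_mul_mpow {n : Type*} [Fintype n] [DecidableEq n] {M : Matrix n n ℂ}
    (hM : M.PosDef) (r s : ℝ) : mpow M r * mpow M s = mpow M (r + s) := by
  have h := hM.isHermitian
  have hU : star (h.eigenvectorUnitary : Matrix n n ℂ) * (h.eigenvectorUnitary : Matrix n n ℂ) = 1 :=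
    Unitary.coe_star_mul_self _
  simp only [mpow, dif_pos h]
  have hD : Matrix.diagonal (fun i => ((h.eigenvalues i ^ (r + s) : ℝ) : ℂ)) =
      Matrix.diagonal (fun i => ((h.eigenvalues i ^ r : ℝ) : ℂ)) *
        Matrix.diagonal (fun i => ((h.eigenvalues i ^ s : ℝ) : ℂ)) := by
    rw [Matrix.diagonal_mul_diagonal]
    congr 1
    funext i
    rw [Real.rpow_add (hM.eigenvalues_pos i), Complex.ofReal_mul]
  rw [hD]
  simp only [Matrix.mul_assoc]
  rw [← Matrix.mul_assoc (star _) (h.eigenvectorUnitary : Matrix n n ℂ), hU, Matrix.one_mul]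

/-- The operator on `B` given by the `(i, j)` block of an operator on `A ⊗ B`. -/
def blockB {dA dB : ℕ} (ρ : Matrix (Fin dA × Fin dB) (Fin dA × Fin dB) ℂ) (i j : Fin dA) :
    Matrix (Fin dB) (Fin dB) ℂ :=
  Matrix.of fun b b' => ρ (i, b) (j, b')

theorem conjTranspose_blockB {dA dB : ℕ}
    {ρ : Matrix (Fin dA × Fin dB) (Fin dA × Fin dB) ℂ} (hρ : ρ.IsHermitian) (i j : Fin dA) :
    (blockB ρ i j)ᴴ = blockB ρ j i := by
  ext b b'
  simp [blockB, hρ.apply]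

theorem blockB_mul_one_kronecker {dA dB : ℕ}
    (ρ : Matrix (Fin dA × Fin dB) (Fin dA × Fin dB) ℂ) (M : Matrix (Fin dB) (Fin dB) ℂ)
    (i j : Fin dA) :
    blockB (ρ * ((1 : Matrix (Fin dA) (Fin dA) ℂ) ⊗ₖ M)) i j = blockB ρ i j * M := by
  ext b b'
  simp [blockB, Matrix.mul_apply, Fintype.sum_prod_type, Matrix.one_apply]

theorem trace_mul_eq_sum_blockB {dA dB : ℕ}
    (ρ σ : Matrix (Fin dA × Fin dB) (Fin dA × Fin dB) ℂ) :
    (ρ * σ).trace = ∑ i, ∑ j, (blockB ρ i j * blockB σ j i).trace := by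
  simp only [Matrix.trace, Matrix.diag_apply, Matrix.mul_apply, Fintype.sum_prod_type, blockB,
    Matrix.of_apply]
  exact Finset.sum_congr rfl fun i _ => Finset.sum_comm

theorem choiMap_single {dA dB : ℕ} (ρ : Matrix (Fin dA × Fin dB) (Fin dA × Fin dB) ℂ)
    (i j : Fin dA) : choiMap ρ (Matrix.single i j 1) = (dA : ℂ) • blockB ρ i j := by
  unfold choiMap
  congr 1
  ext b b'
  simp [ptraceA, blockB, Matrix.mul_apply, Fintype.sum_prod_type, Matrix.single_apply,
    Matrix.one_apply, ite_and]

/-- The matrix entries of a Hilbert–Schmidt adjoint of the Choi–Jamiołkowski map. -/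
theorem adjoint_choiMap_apply {dA dB : ℕ}
    {ρ : Matrix (Fin dA × Fin dB) (Fin dA × Fin dB) ℂ} (hρ : ρ.IsHermitian)
    {Eadj : Matrix (Fin dB) (Fin dB) ℂ → Matrix (Fin dA) (Fin dA) ℂ}
    (hEadj : ∀ (X : Matrix (Fin dB) (Fin dB) ℂ) (Y : Matrix (Fin dA) (Fin dA) ℂ),
      ((Eadj X)ᴴ * Y).trace = (Xᴴ * choiMap ρ Y).trace)
    (X : Matrix (Fin dB) (Fin dB) ℂ) (i j : Fin dA) :
    Eadj X i j = dA * (blockB ρ j i * X).trace := by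
  have h := congrArg star (hEadj X (Matrix.single i j 1))
  rw [choiMap_single, ← Matrix.trace_conjTranspose (Xᴴ * _)] at h
  simpa [Matrix.trace_mul_single, conjTranspose_blockB hρ] using h

/-- The expectation value of `(id_A ⊗ Λ)(ρ)` in the maximally entangled state. -/
theorem maxEnt_idTensor {dA dB : ℕ}
    (Λ : Matrix (Fin dB) (Fin dB) ℂ → Matrix (Fin dA) (Fin dA) ℂ)
    (ρ : Matrix (Fin dA × Fin dB) (Fin dA × Fin dB) ℂ) :
    star (maxEnt dA) ⬝ᵥ idTensor Λ ρ *ᵥ maxEnt dA =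
      (dA : ℂ)⁻¹ * ∑ i, ∑ j, Λ (blockB ρ i j) i j := by
  have hs : (((Real.sqrt dA : ℝ) : ℂ))⁻¹ * ((Real.sqrt dA : ℝ) : ℂ)⁻¹ = (dA : ℂ)⁻¹ := by
    rw [← mul_inv, ← Complex.ofReal_mul, Real.mul_self_sqrt (Nat.cast_nonneg _),
      Complex.ofReal_natCast]
  simp only [dotProduct, Matrix.mulVec, Fintype.sum_prod_type, maxEnt, idTensor, Pi.star_apply,
    Matrix.of_apply, mul_ite, mul_zero, Finset.sum_ite_eq, Finset.mem_univ, if_true, apply_ite star,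
    star_zero, ite_mul, zero_mul, Finset.mul_sum, blockB]
  refine Finset.sum_congr rfl fun i _ => ?_
  rw [Finset.sum_eq_single i (fun k _ hk => by simp [hk.symm]) (by simp)]
  refine Finset.sum_congr rfl fun j _ => ?_
  rw [← hs, if_pos rfl]
  simp only [RCLike.star_def, map_inv₀, Complex.conj_ofReal]
  ring

theorem trace_tildeRho_mul_self {dA dB : ℕ}
    {ρ : Matrix (Fin dA × Fin dB) (Fin dA × Fin dB) ℂ} (hρB : (ptraceA ρ).PosDef) :
    (tildeRho ρ * tildeRho ρ).trace =
      ∑ i, ∑ j, (blockB ρ i j * mpow (ptraceA ρ) (-(1/2 : ℝ)) *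
        (blockB ρ j i * mpow (ptraceA ρ) (-(1/2 : ℝ)))).trace := by
  have hQ : ((1 : Matrix (Fin dA) (Fin dA) ℂ) ⊗ₖ mpow (ptraceA ρ) (-(1/4 : ℝ))) *
      ((1 : Matrix (Fin dA) (Fin dA) ℂ) ⊗ₖ mpow (ptraceA ρ) (-(1/4 : ℝ))) =
      (1 : Matrix (Fin dA) (Fin dA) ℂ) ⊗ₖ mpow (ptraceA ρ) (-(1/2 : ℝ)) := by
    rw [← Matrix.mul_kronecker_mul, Matrix.one_mul, mpow_mul_mpow hρB]
    norm_num
  have hB := trace_mul_eq_sum_blockB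
    (ρ * ((1 : Matrix (Fin dA) (Fin dA) ℂ) ⊗ₖ mpow (ptraceA ρ) (-(1/2 : ℝ))))
    (ρ * ((1 : Matrix (Fin dA) (Fin dA) ℂ) ⊗ₖ mpow (ptraceA ρ) (-(1/2 : ℝ))))
  simp only [blockB_mul_one_kronecker] at hB
  rw [← hB, ← hQ, tildeRho, Matrix.mul_assoc _ ρ, Matrix.mul_assoc,
    Matrix.trace_mul_comm]
  simp only [Matrix.mul_assoc]

/-- operational meaning of the conditional Rényi 2-entropy via the
pretty good recovery map `Λ^pg(X) = (1/d_A) 𝓔†(ρ_B^{-1/2} X ρ_B^{-1/2})`: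
`⟨Φ| (id_A ⊗ Λ^pg)(ρ_AB) |Φ⟩ = (1/d_A) Tr[ρ̃_AB²]`, i.e.
`H₂(A|B) = −log₂[d_A · F^pg(A|B)]`. -/
theorem h2_pretty_good_recovery
    (dA dB : ℕ) (hdA : 1 ≤ dA) (hdB : 1 ≤ dB)
    (ρ : Matrix (Fin dA × Fin dB) (Fin dA × Fin dB) ℂ)
    (hρ : ρ.PosSemidef) (hρtr : ρ.trace = 1)
    (hρB : (ptraceA ρ).PosDef)
    (Eadj : Matrix (Fin dB) (Fin dB) ℂ → Matrix (Fin dA) (Fin dA) ℂ)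
    (hEadj : ∀ (X : Matrix (Fin dB) (Fin dB) ℂ) (Y : Matrix (Fin dA) (Fin dA) ℂ),
      ((Eadj X)ᴴ * Y).trace = (Xᴴ * choiMap ρ Y).trace) :
    star (maxEnt dA) ⬝ᵥ
        (idTensor (fun X => ((dA : ℂ))⁻¹ •
            Eadj (mpow (ptraceA ρ) (-(1/2 : ℝ)) * X * mpow (ptraceA ρ) (-(1/2 : ℝ)))) ρ)
          *ᵥ maxEnt dA
      = ((dA : ℂ))⁻¹ * (tildeRho ρ * tildeRho ρ).trace := by
  have hd : (dA : ℂ) ≠ 0 := Nat.cast_ne_zero.mpr (Nat.one_le_iff_ne_zero.mp hdA)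
  rw [maxEnt_idTensor, trace_tildeRho_mul_self hρB, Finset.sum_comm]
  congr 1
  refine Finset.sum_congr rfl fun j _ => Finset.sum_congr rfl fun i _ => ?_
  rw [Matrix.smul_apply, adjoint_choiMap_apply hρ.isHermitian hEadj, smul_eq_mul,
    inv_mul_cancel_left₀ hd]
  simp only [Matrix.mul_assoc]

end
end

section
/- Let ρ_AB be a density matrix on ℂ^{d_A} ⊗ ℂ^{d_B} with ρ_B positive definite, and let {|k⟩}_{k=1}^{d_A} be any orthonormal basis of ℂ^{d_A}. Then the pretty-good guessing probability dominates the pretty-good singlet fraction: Σ_{k=1}^{d_A} Tr[ρ_B^{−1/2} ρ_B^{k} ρ_B^{−1/2} ρ_B^{k}] ≥ (1/d_A) · Tr[ρ̃_AB²], where ρ_B^{k} = Tr_A[(|k⟩⟨k| ⊗ I_B) ρ_AB]. -/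
open Matrix BigOperators ComplexOrder Kronecker

noncomputable section

/-- `mpow` always produces a Hermitian matrix, junk value included. -/
theorem mpow_conjTranspose {n : Type*} [Fintype n] [DecidableEq n] (M : Matrix n n ℂ) (r : ℝ) :
    (mpow M r)ᴴ = mpow M r := by
  unfold mpow
  split_ifs with h
  · rw [conjTranspose_mul, conjTranspose_mul, diagonal_conjTranspose, star_eq_conjTranspose,
      conjTranspose_conjTranspose, Matrix.mul_assoc]
    congr 3
    ext i
    simp
  · simp

/-- The squared Hilbert–Schmidt norm of a Hermitian matrix, entrywise. -/
theorem Matrix.IsHermitian.re_trace_mul_self {n : Type*} [Fintype n] {T : Matrix n n ℂ}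
    (hT : T.IsHermitian) : (T * T).trace.re = ∑ a, ∑ b, ‖T a b‖ ^ 2 := by
  simp only [trace, diag, mul_apply, Complex.re_sum]
  refine Finset.sum_congr rfl fun a _ => Finset.sum_congr rfl fun b _ => ?_
  rw [← hT.apply b a, Complex.star_def, Complex.mul_conj, Complex.ofReal_re,
    Complex.normSq_eq_norm_sq]

/-- Cauchy–Schwarz for the Hilbert–Schmidt norm of a sum of Hermitian matrices. -/
theorem re_trace_sum_mul_sum_le {n ι : Type*} [Fintype n] [Fintype ι] {T : ι → Matrix n n ℂ}
    (hT : ∀ k, (T k).IsHermitian) :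
    ((∑ k, T k) * ∑ k, T k).trace.re ≤ Fintype.card ι * ∑ k, (T k * T k).trace.re := by
  have hsum : (∑ k, T k).IsHermitian := by
    rw [IsHermitian, conjTranspose_sum]
    exact Finset.sum_congr rfl fun k _ => hT k
  rw [hsum.re_trace_mul_self, Finset.sum_congr rfl fun k _ => (hT k).re_trace_mul_self,
    Finset.sum_comm (s := Finset.univ (α := ι)), Finset.mul_sum]
  refine Finset.sum_le_sum fun a _ => ?_
  rw [Finset.sum_comm (s := Finset.univ (α := ι)), Finset.mul_sum]
  refine Finset.sum_le_sum fun b _ => ?_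
  rw [Matrix.sum_apply]
  calc ‖∑ k, T k a b‖ ^ 2 ≤ (∑ k, ‖T k a b‖) ^ 2 := by
        gcongr
        exact norm_sum_le Finset.univ fun k => T k a b
    _ ≤ _ := by simpa using sq_sum_le_card_mul_sum_sq (s := Finset.univ) (f := fun k => ‖T k a b‖)

open scoped MatrixOrder in
/-- For a resolution of the identity into Hermitian matrices `P k`, the purity of a positive
semidefinite `σ` is controlled by the terms `Tr[P k σ P k σ]`. -/
theorem Matrix.PosSemidef.re_trace_mul_self_le {n ι : Type*} [Fintype n] [DecidableEq n]
    [Fintype ι] {σ : Matrix n n ℂ} (hσ : σ.PosSemidef) {P : ι → Matrix n n ℂ}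
    (hP : ∀ k, (P k).IsHermitian) (hsum : ∑ k, P k = 1) :
    (σ * σ).trace.re ≤ Fintype.card ι * ∑ k, (P k * σ * P k * σ).trace.re := by
  obtain ⟨M, rfl⟩ := CStarAlgebra.nonneg_iff_eq_star_mul_self.mp hσ.nonneg
  rw [star_eq_conjTranspose]
  have hT : ∀ k, (M * P k * Mᴴ).IsHermitian := fun k =>
    isHermitian_mul_mul_conjTranspose M (hP k)
  have h := re_trace_sum_mul_sum_le hT
  rw [← Matrix.sum_mul, ← Matrix.mul_sum, hsum, Matrix.mul_one] at h
  convert h using 1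
  · rw [Matrix.mul_assoc, trace_mul_comm]
    simp only [Matrix.mul_assoc]
  · congr 1
    refine Finset.sum_congr rfl fun k _ => ?_
    rw [Matrix.mul_assoc M, Matrix.mul_assoc M, trace_mul_comm M]
    simp only [Matrix.mul_assoc]

/-- Compressing by `|v⟩⟨v| ⊗ I` on both sides leaves the conditional operator on `B`. -/
theorem kronecker_mul_mul_kronecker_eq {dA dB : ℕ}
    (ρ : Matrix (Fin dA × Fin dB) (Fin dA × Fin dB) ℂ) (v : Fin dA → ℂ) :
    (vecMulVec v (star v) ⊗ₖ (1 : Matrix (Fin dB) (Fin dB) ℂ)) * ρ *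
      (vecMulVec v (star v) ⊗ₖ (1 : Matrix (Fin dB) (Fin dB) ℂ)) =
    vecMulVec v (star v) ⊗ₖ condB ρ v := by
  ext ⟨a, i⟩ ⟨b, j⟩
  simp only [condB, ptraceA, mul_apply, kroneckerMap_apply, vecMulVec_apply, of_apply, one_apply,
    Fintype.sum_prod_type, mul_ite, ite_mul, mul_one, mul_zero, zero_mul, Finset.sum_ite_eq,
    Finset.sum_ite_eq', Finset.mem_univ, if_true, Finset.sum_mul, Finset.mul_sum]
  refine Finset.sum_congr rfl fun c _ => Finset.sum_congr rfl fun d _ => ?_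
  ring

theorem vecMulVec_star_mul_self {n : Type*} [Fintype n] {v : n → ℂ} (hv : star v ⬝ᵥ v = 1) :
    vecMulVec v (star v) * vecMulVec v (star v) = vecMulVec v (star v) := by
  rw [vecMulVec_mul_vecMulVec, hv, one_smul]

/-- The guessing term is `Tr[P ρ̃ P ρ̃]` for the projection `P = |v⟩⟨v| ⊗ I`. -/
theorem trace_projection_tildeRho {dA dB : ℕ}
    {ρ : Matrix (Fin dA × Fin dB) (Fin dA × Fin dB) ℂ} (hρB : (ptraceA ρ).PosDef)
    {v : Fin dA → ℂ} (hv : star v ⬝ᵥ v = 1) :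
    ((vecMulVec v (star v) ⊗ₖ (1 : Matrix (Fin dB) (Fin dB) ℂ)) * tildeRho ρ *
      (vecMulVec v (star v) ⊗ₖ (1 : Matrix (Fin dB) (Fin dB) ℂ)) * tildeRho ρ).trace =
    pgTerm ρ v := by
  have hQ : mpow (ptraceA ρ) (-(1/4 : ℝ)) * mpow (ptraceA ρ) (-(1/4 : ℝ)) =
      mpow (ptraceA ρ) (-(1/2 : ℝ)) := by
    rw [mpow_mul_mpow hρB]; norm_num
  unfold pgTerm tildeRho
  rw [← hQ]
  set Q := mpow (ptraceA ρ) (-(1/4 : ℝ))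
  set c := condB ρ v with hc
  set p := vecMulVec v (star v) with hp
  have hpp : p * p = p := vecMulVec_star_mul_self hv
  have htr : p.trace = 1 := by rw [hp, trace_vecMulVec, dotProduct_comm, hv]
  set P := p ⊗ₖ (1 : Matrix (Fin dB) (Fin dB) ℂ) with hP
  set S := (1 : Matrix (Fin dA) (Fin dA) ℂ) ⊗ₖ Q with hS
  have hPP : P * P = P := by rw [hP, ← mul_kronecker_mul, hpp, Matrix.one_mul]
  have hcomm : P * S = S * P := by
    rw [hP, hS, ← mul_kronecker_mul, ← mul_kronecker_mul]; simp
  have hcompress : P * (S * ρ * S) * P = p ⊗ₖ (Q * c * Q) := by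
    calc P * (S * ρ * S) * P = (P * S) * ρ * (S * P) := by simp only [Matrix.mul_assoc]
      _ = S * (P * ρ * P) * S := by rw [← hcomm, hcomm]; simp only [Matrix.mul_assoc, hcomm]
      _ = _ := by
        rw [kronecker_mul_mul_kronecker_eq, hS, ← mul_kronecker_mul, ← mul_kronecker_mul]
        simp [hc, hp]
  calc (P * (S * ρ * S) * P * (S * ρ * S)).trace
      = ((P * (S * ρ * S) * P) * (P * (S * ρ * S) * P)).trace := by
        rw [← Matrix.mul_assoc _ (P * _) P, trace_mul_comm _ P]
        simp only [← Matrix.mul_assoc, hPP]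
        rw [Matrix.mul_assoc _ P P, hPP]
    _ = (Q * c * Q * (Q * c * Q)).trace := by
        rw [hcompress, ← mul_kronecker_mul, hpp, trace_kronecker, htr, one_mul]
    _ = (Q * Q * c * (Q * Q) * c).trace := by
        rw [← Matrix.mul_assoc (Q * c * Q), trace_mul_comm]
        simp only [Matrix.mul_assoc]

/-- An orthonormal family of full size resolves the identity. -/
theorem sum_vecMulVec_star_eq_one {n : Type*} [Fintype n] [DecidableEq n] {v : n → n → ℂ}
    (horth : ∀ k k', star (v k) ⬝ᵥ v k' = if k = k' then (1 : ℂ) else 0) :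
    ∑ k, vecMulVec (v k) (star (v k)) = 1 := by
  have h : (of v).map star * (of v)ᵀ = 1 := by
    ext k k'
    simpa [mul_apply, dotProduct, one_apply] using horth k k'
  rw [mul_eq_one_comm] at h
  rw [← h]
  ext a b
  simp [Matrix.sum_apply, mul_apply, vecMulVec_apply]

theorem tildeRho_posSemidef {dA dB : ℕ}
    {ρ : Matrix (Fin dA × Fin dB) (Fin dA × Fin dB) ℂ} (hρ : ρ.PosSemidef) :
    (tildeRho ρ).PosSemidef := by
  have h := hρ.mul_mul_conjTranspose_same
    ((1 : Matrix (Fin dA) (Fin dA) ℂ) ⊗ₖ mpow (ptraceA ρ) (-(1/4 : ℝ)))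
  rwa [conjTranspose_kronecker, conjTranspose_one, mpow_conjTranspose] at h

/-- the pretty-good guessing probability for any orthonormal basis
measurement on `A` dominates the pretty-good singlet fraction:
`Σ_k Tr[ρ_B^{-1/2} ρ_B^k ρ_B^{-1/2} ρ_B^k] ≥ (1/d_A) Tr[ρ̃_AB²]`. -/
theorem pguess_ge_singlet_fraction
    (dA dB : ℕ) (hdA : 1 ≤ dA) (hdB : 1 ≤ dB)
    (ρ : Matrix (Fin dA × Fin dB) (Fin dA × Fin dB) ℂ)
    (hρ : ρ.PosSemidef) (hρtr : ρ.trace = 1)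
    (hρB : (ptraceA ρ).PosDef)
    (v : Fin dA → (Fin dA → ℂ))
    (horth : ∀ k k', star (v k) ⬝ᵥ v k' = if k = k' then (1 : ℂ) else 0) :
    ((dA : ℂ)⁻¹ * (tildeRho ρ * tildeRho ρ).trace).re
      ≤ (∑ k : Fin dA, pgTerm ρ (v k)).re := by
  have hv : ∀ k, star (v k) ⬝ᵥ v k = 1 := fun k => by simpa using horth k k
  have h := (tildeRho_posSemidef hρ).re_trace_mul_self_le
    (P := fun k => vecMulVec (v k) (star (v k)) ⊗ₖ (1 : Matrix (Fin dB) (Fin dB) ℂ))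
    (fun k => by
      rw [IsHermitian, conjTranspose_kronecker, conjTranspose_one, conjTranspose_vecMulVec,
        star_star])
    (by
      rw [← one_kronecker_one, ← sum_vecMulVec_star_eq_one horth]
      ext ⟨a, i⟩ ⟨b, j⟩
      simp [Matrix.sum_apply, Finset.sum_mul])
  simp only [trace_projection_tildeRho hρB (hv _),
    Fintype.card_fin] at h
  have hd : (0 : ℝ) < dA := by exact_mod_cast hdA
  rw [← Complex.ofReal_natCast, ← Complex.ofReal_inv, Complex.re_ofReal_mul, Complex.re_sum,
    inv_mul_le_iff₀ hd]
  exact h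

end
end

section
/- Let ρ_AB be a density matrix on ℂ^{d_A} ⊗ ℂ^{d_B} with ρ_B positive definite, and let {|k⟩}_{k=1}^{d_A} be any orthonormal basis of ℂ^{d_A}. Then the pretty-good guessing probability is at least that of a uniformly random guess: Σ_{k=1}^{d_A} Tr[ρ_B^{−1/2} ρ_B^{k} ρ_B^{−1/2} ρ_B^{k}] ≥ 1/d_A, where ρ_B^{k} = Tr_A[(|k⟩⟨k| ⊗ I_B) ρ_AB]. -/
open Matrix BigOperators ComplexOrder Kronecker

noncomputable section

lemma condB_apply {dA dB : ℕ} (ρ : Matrix (Fin dA × Fin dB) (Fin dA × Fin dB) ℂ)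
    (v : Fin dA → ℂ) (i j : Fin dB) :
    condB ρ v i j = ∑ a, ∑ c, v a * star (v c) * ρ (c, i) (a, j) := by
  simp [condB, ptraceA, Matrix.mul_apply, Fintype.sum_prod_type, vecMulVec_apply,
    Matrix.one_apply]

lemma condB_isHermitian {dA dB : ℕ} {ρ : Matrix (Fin dA × Fin dB) (Fin dA × Fin dB) ℂ}
    (hρ : ρ.IsHermitian) (v : Fin dA → ℂ) : (condB ρ v).IsHermitian := by
  ext i j
  rw [conjTranspose_apply, condB_apply, condB_apply]
  simp only [star_sum]
  rw [Finset.sum_comm]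
  refine Finset.sum_congr rfl fun a _ => Finset.sum_congr rfl fun c _ => ?_
  rw [star_mul', star_mul', star_star, hρ.apply]
  ring

lemma sum_condB {dA dB : ℕ} (ρ : Matrix (Fin dA × Fin dB) (Fin dA × Fin dB) ℂ)
    (v : Fin dA → Fin dA → ℂ)
    (horth : ∀ k k', star (v k) ⬝ᵥ v k' = if k = k' then (1 : ℂ) else 0) :
    ∑ k, condB ρ (v k) = ptraceA ρ := by
  have hV : (Matrix.of v).map star * (Matrix.of v)ᵀ = 1 := by
    ext k k'
    simpa [Matrix.mul_apply, dotProduct, Matrix.one_apply] using horth k k'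
  have hcomplete : ∀ a c, ∑ k, v k a * star (v k c) = if a = c then (1 : ℂ) else 0 := by
    intro a c
    have h := congrArg (fun N => N a c) (mul_eq_one_comm.mp hV)
    simpa [Matrix.mul_apply, Matrix.one_apply] using h
  ext i j
  simp only [Matrix.sum_apply, condB_apply]
  rw [Finset.sum_comm]
  simp only [ptraceA, of_apply]
  refine Finset.sum_congr rfl fun a _ => ?_
  rw [Finset.sum_comm]
  simp_rw [← Finset.sum_mul, hcomplete]
  simp

lemma mpow_posSemidef {n : Type*} [Fintype n] [DecidableEq n] {M : Matrix n n ℂ}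
    (hM : M.PosSemidef) (r : ℝ) : (mpow M r).PosSemidef := by
  rw [mpow, dif_pos hM.isHermitian]
  refine PosSemidef.mul_mul_conjTranspose_same (PosSemidef.diagonal fun i => ?_) _
  exact Complex.zero_le_real.mpr (Real.rpow_nonneg (hM.eigenvalues_nonneg i) r)

lemma mpow_neg_half_mul_self_mul_mpow_neg_half {n : Type*} [Fintype n] [DecidableEq n]
    {M : Matrix n n ℂ} (hM : M.PosDef) :
    mpow M (-(1 / 2 : ℝ)) * M * mpow M (-(1 / 2 : ℝ)) = 1 := by
  have h := hM.isHermitian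
  rw [mpow, dif_pos h]
  set U : Matrix n n ℂ := (h.eigenvectorUnitary : Matrix n n ℂ) with hU
  set D : Matrix n n ℂ := diagonal fun i => ((h.eigenvalues i ^ (-(1 / 2 : ℝ)) : ℝ) : ℂ) with hD
  set E : Matrix n n ℂ := diagonal fun i => (h.eigenvalues i : ℂ) with hE
  have hUU : star U * U = 1 := Unitary.coe_star_mul_self h.eigenvectorUnitary
  have hUU' : U * star U = 1 := Unitary.coe_mul_star_self h.eigenvectorUnitary
  have hspec : M = U * E * star U := h.spectral_theorem
  have hDED : D * E * D = 1 := by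
    rw [hD, hE, diagonal_mul_diagonal, diagonal_mul_diagonal, ← diagonal_one]
    congr 1
    ext i
    have hpos := hM.eigenvalues_pos i
    norm_cast
    nth_rewrite 2 [← Real.rpow_one (h.eigenvalues i)]
    rw [← Real.rpow_add hpos, ← Real.rpow_add hpos]
    norm_num
  calc U * D * star U * M * (U * D * star U)
      = U * D * star U * (U * E * star U) * (U * D * star U) := by rw [← hspec]
    _ = U * (D * ((star U * U) * (E * ((star U * U) * (D * star U))))) := by
        simp only [Matrix.mul_assoc]
    _ = U * (D * E * D) * star U := by
        rw [hUU]; simp only [Matrix.one_mul, Matrix.mul_assoc]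
    _ = 1 := by rw [hDED, Matrix.mul_one, hUU']

open scoped MatrixOrder Matrix.Norms.L2Operator in
lemma Matrix.PosSemidef.trace_mul_mul_mul_nonneg {n : Type*} [Fintype n]
    {P Z : Matrix n n ℂ} (hP : P.PosSemidef) (hZ : Z.IsHermitian) :
    0 ≤ (P * Z * P * Z).trace := by
  classical
  obtain ⟨B, rfl⟩ := CStarAlgebra.nonneg_iff_eq_star_mul_self.mp hP.nonneg
  rw [star_eq_conjTranspose]
  have key : (Bᴴ * B * Z * (Bᴴ * B) * Z).trace = ((B * Z * Bᴴ)ᴴ * (B * Z * Bᴴ)).trace := by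
    rw [conjTranspose_mul, conjTranspose_mul, conjTranspose_conjTranspose, hZ.eq]
    simp only [Matrix.mul_assoc]
    rw [trace_mul_comm]
    simp only [Matrix.mul_assoc]
  rw [key]
  exact (posSemidef_conjTranspose_mul_self _).trace_nonneg

lemma trace_ptraceA {dA dB : ℕ} (ρ : Matrix (Fin dA × Fin dB) (Fin dA × Fin dB) ℂ) :
    (ptraceA ρ).trace = ρ.trace := by
  simp only [trace, diag_apply, ptraceA, of_apply, Fintype.sum_prod_type]
  exact Finset.sum_comm

/-- Expansion of the quadratic form `Z ↦ Tr[P Z P Z]` at `Z - c M`, where `P M P = 1`. -/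
lemma trace_quadratic_sub_smul {n : Type*} [Fintype n] [DecidableEq n] {P M : Matrix n n ℂ}
    (hPMP : P * M * P = 1) (Z : Matrix n n ℂ) (c : ℂ) :
    (P * (Z - c • M) * P * (Z - c • M)).trace =
      (P * Z * P * Z).trace - 2 * c * Z.trace + c ^ 2 * M.trace := by
  have hcross : (P * Z * P * M).trace = Z.trace := by
    rw [show P * Z * P * M = P * Z * (P * M) by simp only [Matrix.mul_assoc], trace_mul_comm,
      ← Matrix.mul_assoc, hPMP, Matrix.one_mul]
  simp only [Matrix.mul_sub, Matrix.sub_mul, Matrix.mul_smul, Matrix.smul_mul, hPMP,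
    Matrix.one_mul, trace_sub, trace_smul, smul_eq_mul, hcross]
  ring

/-- the pretty-good guessing probability for any orthonormal basis
measurement on `A` is at least that of a uniformly random guess:
`Σ_k Tr[ρ_B^{-1/2} ρ_B^k ρ_B^{-1/2} ρ_B^k] ≥ 1/d_A`. -/
theorem pguess_ge_random_guess
    (dA dB : ℕ) (hdA : 1 ≤ dA) (hdB : 1 ≤ dB)
    (ρ : Matrix (Fin dA × Fin dB) (Fin dA × Fin dB) ℂ)
    (hρ : ρ.PosSemidef) (hρtr : ρ.trace = 1)
    (hρB : (ptraceA ρ).PosDef)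
    (v : Fin dA → (Fin dA → ℂ))
    (horth : ∀ k k', star (v k) ⬝ᵥ v k' = if k = k' then (1 : ℂ) else 0) :
    (1 : ℝ) / dA ≤ (∑ k : Fin dA, pgTerm ρ (v k)).re := by
  have hPMP := mpow_neg_half_mul_self_mul_mpow_neg_half hρB
  have hP := mpow_posSemidef hρB.posSemidef (-(1 / 2 : ℝ))
  have hd : (dA : ℂ) ≠ 0 := by exact_mod_cast (by lia : dA ≠ 0)
  have hMtr : (ptraceA ρ).trace = 1 := (trace_ptraceA ρ).trans hρtr
  have hsum : ∑ k, (condB ρ (v k)).trace = 1 := by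
    rw [← trace_sum, sum_condB ρ v horth, hMtr]
  have hterm : ∀ k, 0 ≤ pgTerm ρ (v k) - 2 * (dA : ℂ)⁻¹ * (condB ρ (v k)).trace +
      (dA : ℂ)⁻¹ ^ 2 := by
    intro k
    have hZ : (condB ρ (v k) - (dA : ℂ)⁻¹ • ptraceA ρ).IsHermitian :=
      (condB_isHermitian hρ.isHermitian (v k)).sub
        (hρB.isHermitian.smul (by simp [IsSelfAdjoint]))
    have h := hP.trace_mul_mul_mul_nonneg hZ
    rwa [trace_quadratic_sub_smul hPMP, hMtr, mul_one] at h
  have htotal := Finset.sum_nonneg fun k (_ : k ∈ Finset.univ) => hterm k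
  rw [Finset.sum_add_distrib, Finset.sum_sub_distrib, ← Finset.mul_sum, hsum, Finset.sum_const,
    Finset.card_univ, Fintype.card_fin, nsmul_eq_mul,
    show ∑ k, pgTerm ρ (v k) - 2 * (dA : ℂ)⁻¹ * 1 + dA * (dA : ℂ)⁻¹ ^ 2 =
      ∑ k, pgTerm ρ (v k) - ((1 / dA : ℝ) : ℂ) by push_cast; field_simp; ring] at htotal
  have hre := (Complex.le_def.mp htotal).1
  rw [Complex.sub_re, Complex.ofReal_re, Complex.zero_re] at hre
  exact sub_nonneg.mp hre

end
end

section
/- Let ρ_AB = Σ_j p_j · α_j ⊗ β_j be a separable density matrix on ℂ^{d_A} ⊗ ℂ^{d_B} (a finite convex combination, with p_j ≥ 0, Σ_j p_j = 1, α_j density matrices on ℂ^{d_A}, β_j density matrices on ℂ^{d_B}). Let {M_i}_{i∈I} be any finite family of d_A × d_B complex matrices with Σ_i M_i† M_i = I_{d_B} (the Kraus operators of a quantum channel from B to A'), and let |Φ⟩ = (1/√d_A) Σ_{j=1}^{d_A} |j⟩|j⟩ be the maximally entangled state on ℂ^{d_A} ⊗ ℂ^{d_A}. Then ⟨Φ|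 Σ_i (I_{d_A} ⊗ M_i) ρ_AB (I_{d_A} ⊗ M_i)† |Φ⟩ ≤ 1/d_A. In particular, for separable states the conditional min-entropy H_min(A|B) = −log₂[d_A · max_Λ ⟨Φ|(id_A ⊗ Λ)(ρ_AB)|Φ⟩] is nonnegative. -/
open Matrix BigOperators ComplexOrder Kronecker

noncomputable section

open scoped MatrixOrder Matrix.Norms.L2Operator in
theorem Matrix.PosSemidef.exists_eq_conjTranspose_mul_self {n : Type*} [Fintype n]
    {A : Matrix n n ℂ} (hA : A.PosSemidef) : ∃ C : Matrix n n ℂ, A = Cᴴ * C := by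
  classical
  exact CStarAlgebra.nonneg_iff_eq_star_mul_self.mp hA.nonneg

section
attribute [local instance] Matrix.frobeniusNormedAddCommGroup

theorem re_trace_conjTranspose_mul_self {m n : Type*} [Fintype m] [Fintype n]
    (A : Matrix m n ℂ) : (Aᴴ * A).trace.re = ‖A‖ ^ 2 := by
  rw [Matrix.frobenius_norm_def, ← Real.sqrt_eq_rpow, Real.sq_sqrt (by positivity),
    Finset.sum_comm]
  simp [Matrix.trace, Matrix.mul_apply, ← Complex.normSq_eq_norm_sq, Complex.normSq_apply]

/-- Submultiplicativity of the trace on positive semidefinite matrices. -/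
theorem Matrix.PosSemidef.re_trace_mul_le {n : Type*} [Fintype n] {A B : Matrix n n ℂ}
    (hA : A.PosSemidef) (hB : B.PosSemidef) :
    (A * B).trace.re ≤ A.trace.re * B.trace.re := by
  obtain ⟨C, rfl⟩ := hA.exists_eq_conjTranspose_mul_self
  obtain ⟨D, rfl⟩ := hB.exists_eq_conjTranspose_mul_self
  have h : (Cᴴ * C * (Dᴴ * D)).trace = ((C * Dᴴ)ᴴ * (C * Dᴴ)).trace := by
    rw [← Matrix.mul_assoc, Matrix.trace_mul_comm]
    simp only [Matrix.conjTranspose_mul, Matrix.conjTranspose_conjTranspose, Matrix.mul_assoc]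
  rw [h]
  simp only [re_trace_conjTranspose_mul_self]
  rw [← mul_pow, ← Matrix.frobenius_norm_conjTranspose D]
  gcongr
  exact Matrix.frobenius_norm_mul C Dᴴ

end

theorem star_maxEnt_dotProduct_kronecker_mulVec (d : ℕ) (X Y : Matrix (Fin d) (Fin d) ℂ) :
    star (maxEnt d) ⬝ᵥ (X ⊗ₖ Y) *ᵥ maxEnt d = (d : ℂ)⁻¹ * (X * Yᵀ).trace := by
  have hd : ((Real.sqrt d : ℝ) : ℂ)⁻¹ * ((Real.sqrt d : ℝ) : ℂ)⁻¹ = (d : ℂ)⁻¹ := by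
    rw [← mul_inv, ← Complex.ofReal_mul, Real.mul_self_sqrt d.cast_nonneg, Complex.ofReal_natCast]
  rw [← hd]
  simp only [dotProduct, mulVec, maxEnt, Pi.star_apply, Fintype.sum_prod_type, kroneckerMap_apply,
    apply_ite star, star_zero, ite_mul, mul_ite, zero_mul, mul_zero, Finset.sum_ite_eq,
    Finset.mem_univ, if_true, Matrix.trace, Matrix.diag, Matrix.mul_apply,
    Matrix.transpose_apply]
  simp only [Finset.mul_sum]
  refine Finset.sum_congr rfl fun _ _ => Finset.sum_congr rfl fun _ _ => ?_
  simp only [star_inv₀, RCLike.star_def, Complex.conj_ofReal]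
  ring

/-- A product state has overlap at most `1 / d` with the maximally entangled state. -/
theorem re_maxEnt_kronecker_le {d : ℕ} {X Y : Matrix (Fin d) (Fin d) ℂ}
    (hX : X.PosSemidef) (hY : Y.PosSemidef) (hXtr : X.trace = 1) (hYtr : Y.trace = 1) :
    (star (maxEnt d) ⬝ᵥ (X ⊗ₖ Y) *ᵥ maxEnt d).re ≤ 1 / d := by
  have h := hX.re_trace_mul_le hY.transpose
  rw [Matrix.trace_transpose, hXtr, hYtr, Complex.one_re, mul_one] at h
  rw [star_maxEnt_dotProduct_kronecker_mulVec, ← Complex.ofReal_natCast, ← Complex.ofReal_inv,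
    Complex.re_ofReal_mul, one_div]
  exact mul_le_of_le_one_right (by positivity) h

/-- for a separable state `ρ_AB = Σ_j p_j α_j ⊗ β_j` and any quantum
channel from `B` to `A'` with Kraus operators `M_i` (`Σ_i M_i† M_i = I`), the singlet
fraction obtained by applying the channel to `B` is at most `1/d_A`:
`⟨Φ| Σ_i (I ⊗ M_i) ρ_AB (I ⊗ M_i)† |Φ⟩ ≤ 1/d_A`. Hence `H_min(A|B) ≥ 0` for
separable states. -/
theorem separable_singlet_fraction_le
    (dA dB : ℕ) (hdA : 1 ≤ dA) (hdB : 1 ≤ dB)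
    (J : Type) [Fintype J]
    (p : J → ℝ) (hp : ∀ j, 0 ≤ p j) (hpsum : ∑ j, p j = 1)
    (α : J → Matrix (Fin dA) (Fin dA) ℂ)
    (hα : ∀ j, (α j).PosSemidef) (hαtr : ∀ j, (α j).trace = 1)
    (β : J → Matrix (Fin dB) (Fin dB) ℂ)
    (hβ : ∀ j, (β j).PosSemidef) (hβtr : ∀ j, (β j).trace = 1)
    (ρ : Matrix (Fin dA × Fin dB) (Fin dA × Fin dB) ℂ)
    (hρ : ρ = ∑ j, ((p j : ℂ)) • ((α j) ⊗ₖ (β j)))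
    (I : Type) [Fintype I]
    (M : I → Matrix (Fin dA) (Fin dB) ℂ)
    (hM : ∑ i, (M i)ᴴ * M i = (1 : Matrix (Fin dB) (Fin dB) ℂ)) :
    (star (maxEnt dA) ⬝ᵥ
        (∑ i, ((1 : Matrix (Fin dA) (Fin dA) ℂ) ⊗ₖ M i) * ρ *
          ((1 : Matrix (Fin dA) (Fin dA) ℂ) ⊗ₖ M i)ᴴ) *ᵥ maxEnt dA).re
      ≤ 1 / dA := by
  have hch : ∑ i, ((1 : Matrix (Fin dA) (Fin dA) ℂ) ⊗ₖ M i) * ρ *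
      ((1 : Matrix (Fin dA) (Fin dA) ℂ) ⊗ₖ M i)ᴴ =
      ∑ j, (p j : ℂ) • (α j ⊗ₖ ∑ i, M i * β j * (M i)ᴴ) := by
    have hsum (A : Matrix (Fin dA) (Fin dA) ℂ) (F : I → Matrix (Fin dA) (Fin dA) ℂ) :
        A ⊗ₖ ∑ i, F i = ∑ i, A ⊗ₖ F i := by
      ext
      simp only [kroneckerMap_apply, Matrix.sum_apply, Finset.mul_sum]
    simp only [hρ, hsum, Matrix.mul_sum, Matrix.sum_mul, Finset.smul_sum, Matrix.mul_smul,
      Matrix.smul_mul, conjTranspose_kronecker, conjTranspose_one, ← mul_kronecker_mul,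
      Matrix.one_mul, Matrix.mul_one]
    exact Finset.sum_comm
  have hpos (j : J) : (∑ i, M i * β j * (M i)ᴴ).PosSemidef :=
    Matrix.posSemidef_sum _ fun i _ => (hβ j).mul_mul_conjTranspose_same (M i)
  have htr (j : J) : (∑ i, M i * β j * (M i)ᴴ).trace = 1 := by
    have h (i : I) : (M i * β j * (M i)ᴴ).trace = ((M i)ᴴ * M i * β j).trace := by
      rw [Matrix.trace_mul_comm, Matrix.mul_assoc]
    rw [Matrix.trace_sum, Finset.sum_congr rfl fun i _ => h i, ← Matrix.trace_sum,
      ← Matrix.sum_mul, hM, Matrix.one_mul, hβtr]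
  rw [hch, Matrix.sum_mulVec, dotProduct_sum, Complex.re_sum]
  calc _ ≤ ∑ j, p j * (1 / (dA : ℝ)) := by
        refine Finset.sum_le_sum fun j _ => ?_
        rw [Matrix.smul_mulVec, dotProduct_smul, smul_eq_mul, Complex.re_ofReal_mul]
        exact mul_le_mul_of_nonneg_left
          (re_maxEnt_kronecker_le (hα j) (hpos j) (hαtr j) (htr j)) (hp j)
    _ = 1 / dA := by rw [← Finset.sum_mul, hpsum, one_mul]

end
end
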